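/- arXiv:1402.5509 — 2 statements merged into one kernel-verified Lean document; each statement's English description precedes it below -/
import Mathlib

section
/- Let K be a field, n ≥ 4, R = K[T_{ab} : 0 ≤ a < b ≤ n], and let L be the localization of R at the multiplicative set generated by all the variables T_{ab} (the Laurent polynomial ring in these variables). Let I ⊆ L be an ideal and let 0 ≤ i < j < k < l < m ≤ n. If the images in L of the Plücker relations q(i,j,k,l), q(i,j,k,m) and q(i,j,l,m) all lie in I, then the image in L of q(i,k,l,m) lies in I. -/
open MvPolynomial

/-- The index set of the polynomial ring `R = K[T_{ab} : 0 ≤ a < b ≤ n]`. -/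
abbrev PairIdx (n : ℕ) : Type := {p : ℕ × ℕ // p.1 < p.2 ∧ p.2 ≤ n}

/-- The variable `T_{ab}` of `K[T_{ab} : 0 ≤ a < b ≤ n]` (junk value `0` for
invalid index pairs). -/
noncomputable def T (K : Type*) [Field K] (n a b : ℕ) :
    MvPolynomial (PairIdx n) K :=
  if h : a < b ∧ b ≤ n then X ⟨(a, b), h⟩ else 0

/-- The Plücker relation `q(i,j,k,l) = T_{ij}T_{kl} − T_{ik}T_{jl} + T_{il}T_{jk}`. -/
noncomputable def q (K : Type*) [Field K] (n i j k l : ℕ) :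
    MvPolynomial (PairIdx n) K :=
  T K n i j * T K n k l - T K n i k * T K n j l + T K n i l * T K n j k

/-- The multiplicative set generated by all the variables `T_{ab}`. -/
noncomputable abbrev varMonoid (K : Type*) [Field K] (n : ℕ) :
    Submonoid (MvPolynomial (PairIdx n) K) :=
  Submonoid.closure (Set.range (X : PairIdx n → MvPolynomial (PairIdx n) K))

/-- The Laurent polynomial ring: the localization of `R` at the multiplicative
set generated by all the variables. -/
abbrev Laurent (K : Type*) [Field K] (n : ℕ) : Type _ :=
  Localization (varMonoid K n)

/-- The Plücker relation of a family `t` of ring elements indexed by ordered pairs, as an element of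
the ring. The family need not be alternating and the indices need not be increasing, so that the
definition applies to any image of the variables `T_{ab}`. -/
def pluckerRelation {ι R : Type*} [CommRing R] (t : ι → ι → R) (i j k l : ι) : R :=
  t i j * t k l - t i k * t j l + t i l * t j k

section PluckerRelation

variable {ι R : Type*} [CommRing R]

/- Modulo the relations on the right, `t i j * t a b` is the minor `t i a * t j b - t i b * t j a`,
for `a`, `b` among `k`, `l`, `m`. The left-hand side thus becomes the expansion of a 3 × 3
determinant with rows `t i`, `t i`, `t j` and columns `k`, `l`, `m`, which vanishes. -/
theorem mul_pluckerRelation (t : ι → ι → R) (i j k l m : ι) :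
    t i j * pluckerRelation t i k l m =
      t i k * pluckerRelation t i j l m - t i l * pluckerRelation t i j k m +
        t i m * pluckerRelation t i j k l := by
  unfold pluckerRelation
  ring

theorem mul_pluckerRelation_mem (t : ι → ι → R) (I : Ideal R) {i j k l m : ι}
    (hjkl : pluckerRelation t i j k l ∈ I) (hjkm : pluckerRelation t i j k m ∈ I)
    (hjlm : pluckerRelation t i j l m ∈ I) :
    t i j * pluckerRelation t i k l m ∈ I := by
  rw [mul_pluckerRelation]
  exact I.add_mem (I.sub_mem (I.mul_mem_left _ hjlm) (I.mul_mem_left _ hjkm))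
    (I.mul_mem_left _ hjkl)

theorem stmt1_general (t : ι → ι → R) (I : Ideal R) {i j k l m : ι} (hij : IsUnit (t i j))
    (hjkl : pluckerRelation t i j k l ∈ I) (hjkm : pluckerRelation t i j k m ∈ I)
    (hjlm : pluckerRelation t i j l m ∈ I) :
    pluckerRelation t i k l m ∈ I :=
  (I.unit_mul_mem_iff_mem hij).mp (mul_pluckerRelation_mem t I hjkl hjkm hjlm)

end PluckerRelation

section LaurentVariables

variable {K : Type*} [Field K] {n : ℕ}

theorem map_q {S : Type*} [CommRing S] (f : MvPolynomial (PairIdx n) K →+* S) (i j k l : ℕ) :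
    f (q K n i j k l) = pluckerRelation (fun a b ↦ f (T K n a b)) i j k l := by
  simp only [q, pluckerRelation, map_add, map_sub, map_mul]

theorem T_eq_X {a b : ℕ} (h : a < b ∧ b ≤ n) : T K n a b = X ⟨(a, b), h⟩ :=
  dif_pos h

theorem T_mem_varMonoid {a b : ℕ} (h : a < b ∧ b ≤ n) : T K n a b ∈ varMonoid K n := by
  rw [T_eq_X h]
  exact Submonoid.subset_closure (Set.mem_range_self _)

theorem isUnit_algebraMap_T (S : Type*) [CommRing S] [Algebra (MvPolynomial (PairIdx n) K) S]
    [IsLocalization (varMonoid K n) S] {a b : ℕ} (h : a < b ∧ b ≤ n) :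
    IsUnit (algebraMap (MvPolynomial (PairIdx n) K) S (T K n a b)) :=
  IsLocalization.map_units S ⟨T K n a b, T_mem_varMonoid h⟩

end LaurentVariables

/-- If the images in the Laurent polynomial ring `L` of the Plücker relations
`q(i,j,k,l)`, `q(i,j,k,m)` and `q(i,j,l,m)` lie an ideal `I ⊆ L`, then so does
the image of `q(i,k,l,m)`. -/
theorem stmt1 (K : Type*) [Field K] (n : ℕ) (hn : 4 ≤ n)
    (i j k l m : ℕ) (hij : i < j) (hjk : j < k) (hkl : k < l) (hlm : l < m)
    (hmn : m ≤ n)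
    (I : Ideal (Laurent K n))
    (h1 : algebraMap (MvPolynomial (PairIdx n) K) (Laurent K n) (q K n i j k l) ∈ I)
    (h2 : algebraMap (MvPolynomial (PairIdx n) K) (Laurent K n) (q K n i j k m) ∈ I)
    (h3 : algebraMap (MvPolynomial (PairIdx n) K) (Laurent K n) (q K n i j l m) ∈ I) :
    algebraMap (MvPolynomial (PairIdx n) K) (Laurent K n) (q K n i k l m) ∈ I := by
  rw [map_q] at h1 h2 h3 ⊢
  exact stmt1_general _ I (isUnit_algebraMap_T (Laurent K n) ⟨hij, by omega⟩) h1 h2 h3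
end

section
/- Let K be a field, n ≥ 4, R = K[T_{ab} : 0 ≤ a < b ≤ n], and let L be the localization of R at the multiplicative set generated by all the variables T_{ab}. Fix two distinct indices i₀, j₀ ∈ {0, …, n}, and let I ⊆ L be the ideal generated by the images of the Plücker relations q({i₀, j₀, k, l}) for all k, l ∈ {0, …, n} such that i₀, j₀, k, l are pairwise distinct. Then for every choice of pairwise distinct indices i, j, k, l ∈ {0, …, n}, the image in L of the Plücker relation q({i, j, k, l}) lies in I. -/
open MvPolynomial

/-!
The antisymmetric extension `T_{ba} = -T_{ab}` makes the Plücker relation an alternating function of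
its four indices, so a relation through `i₀` and `j₀` may be written with `i₀, j₀` as its first two
entries. Put `u = T_{i₀j₀}` and `m_{kl} = T_{i₀k}T_{j₀l} - T_{i₀l}T_{j₀k}`. The relation
`q(i₀,j₀,k,l)` says that `u T_{kl}` is congruent to the `2 × 2` minor `m_{kl}`, and the minors of a
matrix with two rows satisfy the Plücker relations identically. Hence `u²` times every Plücker
relation lies in the ideal generated by those through `i₀` and `j₀`, and it remains to invert `u`.
-/

/-- The two-index family `t` is alternating, as the entries of an alternating matrix are. The
vanishing of the diagonal is a separate condition because `2` may be a zero divisor. -/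
structure IsAlternatingFamily {ι A : Type*} [NegZeroClass A] (t : ι → ι → A) : Prop where
  self_eq_zero (a : ι) : t a a = 0
  eq_neg_swap (a b : ι) : t a b = -t b a

section PluckerRel

variable {ι A : Type*} [CommRing A] {t : ι → ι → A} {I : Ideal A}

/-- The Plücker relation of a family `t` at a quadruple of indices, which may be unsorted or have
repetitions. For alternating `t` it is the Pfaffian of the `4 × 4` matrix `t (x r) (x s)`. -/
def pluckerRel (t : ι → ι → A) (x : Fin 4 → ι) : A :=
  t (x 0) (x 1) * t (x 2) (x 3) - t (x 0) (x 2) * t (x 1) (x 3) + t (x 0) (x 3) * t (x 1) (x 2)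

theorem pluckerRel_comp_swap (ht : IsAlternatingFamily t) (x : Fin 4 → ι) {r s : Fin 4}
    (hrs : r ≠ s) : pluckerRel t (x ∘ Equiv.swap r s) = -pluckerRel t x := by
  have hneg := ht.eq_neg_swap
  fin_cases r <;> fin_cases s <;> grind [pluckerRel]

theorem pluckerRel_comp_perm (ht : IsAlternatingFamily t) (x : Fin 4 → ι)
    (σ : Equiv.Perm (Fin 4)) :
    pluckerRel t (x ∘ σ) = (Equiv.Perm.sign σ : ℤ) * pluckerRel t x := by
  induction σ using Equiv.Perm.swap_induction_on' with
  | one => simp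
  | mul_swap σ r s hrs ih =>
    rw [Equiv.Perm.coe_mul, ← Function.comp_assoc, pluckerRel_comp_swap ht _ hrs, ih]
    simp [Equiv.Perm.sign_swap hrs]

theorem pluckerRel_comp_perm_mem_iff (ht : IsAlternatingFamily t) (x : Fin 4 → ι)
    (σ : Equiv.Perm (Fin 4)) : pluckerRel t (x ∘ σ) ∈ I ↔ pluckerRel t x ∈ I := by
  rw [pluckerRel_comp_perm ht]
  exact I.unit_mul_mem_iff_mem ((Equiv.Perm.sign σ).isUnit.map (Int.castRingHom A))

theorem pluckerRel_eq_zero_of_not_injective (ht : IsAlternatingFamily t) {x : Fin 4 → ι}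
    (hx : ¬Function.Injective x) : pluckerRel t x = 0 := by
  obtain ⟨r, s, hxrs, hrs⟩ := Function.not_injective_iff.mp hx
  have hself := ht.self_eq_zero
  have hneg := ht.eq_neg_swap
  fin_cases r <;> fin_cases s <;> grind [pluckerRel]

theorem pluckerRel_mem_of_strictMono [LinearOrder ι] (ht : IsAlternatingFamily t) {s : Set ι}
    (hI : ∀ x : Fin 4 → ι, StrictMono x → s ⊆ Set.range x → pluckerRel t x ∈ I)
    (x : Fin 4 → ι) (hx : s ⊆ Set.range x) : pluckerRel t x ∈ I := by
  by_cases hinj : Function.Injective x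
  · rw [← pluckerRel_comp_perm_mem_iff ht x (Tuple.sort x)]
    refine hI _ ((Tuple.monotone_sort x).strictMono_of_injective
      (hinj.comp (Tuple.sort x).injective)) ?_
    rwa [(Tuple.sort x).surjective.range_comp]
  · rw [pluckerRel_eq_zero_of_not_injective ht hinj]
    exact I.zero_mem

theorem sq_mul_pluckerRel_mem {i j : ι} (hI : ∀ k l, pluckerRel t ![i, j, k, l] ∈ I)
    (x : Fin 4 → ι) : t i j ^ 2 * pluckerRel t x ∈ I := by
  let m (k l : ι) : A := t i k * t j l - t i l * t j k
  have mul_sub_mem (a b c d : ι) : t i j ^ 2 * (t a b * t c d) - m a b * m c d ∈ I := by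
    have expand : t i j ^ 2 * (t a b * t c d) - m a b * m c d =
        t i j * t c d * pluckerRel t ![i, j, a, b] + m a b * pluckerRel t ![i, j, c, d] := by
      simp only [pluckerRel, Matrix.cons_val, m]
      ring
    rw [expand]
    exact I.add_mem (I.mul_mem_left _ (hI a b)) (I.mul_mem_left _ (hI c d))
  have minors : m (x 0) (x 1) * m (x 2) (x 3) - m (x 0) (x 2) * m (x 1) (x 3)
      + m (x 0) (x 3) * m (x 1) (x 2) = 0 := by
    ring
  convert I.add_mem (I.sub_mem (mul_sub_mem (x 0) (x 1) (x 2) (x 3))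
    (mul_sub_mem (x 0) (x 2) (x 1) (x 3))) (mul_sub_mem (x 0) (x 3) (x 1) (x 2)) using 1
  rw [pluckerRel]
  linear_combination minors

end PluckerRel

section Polynomial

variable (K : Type*) [Field K] (n : ℕ)

/-- The antisymmetric extension of the variables: `T_{ab}` for `a < b`, `-T_{ba}` for `b < a`, and
`0` for `a = b`. In each case the junk value of `T` kills the superfluous terms. -/
noncomputable def skewT (a b : Fin (n + 1)) : MvPolynomial (PairIdx n) K :=
  T K n a b - T K n b a

theorem isAlternatingFamily_skewT : IsAlternatingFamily (skewT K n) where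
  self_eq_zero _ := sub_self _
  eq_neg_swap _ _ := (neg_sub _ _).symm

variable {K n}

theorem skewT_of_lt {a b : Fin (n + 1)} (hab : a < b) : skewT K n a b = T K n a b := by
  have T_swap : T K n b a = 0 := dif_neg fun h => hab.not_gt h.1
  rw [skewT, T_swap, sub_zero]

theorem pluckerRel_skewT {x : Fin 4 → Fin (n + 1)} (hx : StrictMono x) :
    pluckerRel (skewT K n) x = q K n (x 0) (x 1) (x 2) (x 3) := by
  have skewT_apply {r s : Fin 4} (hrs : r < s) : skewT K n (x r) (x s) = T K n (x r) (x s) :=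
    skewT_of_lt (hx hrs)
  simp [pluckerRel, q, skewT_apply]

theorem isUnit_map_skewT {A : Type*} [CommRing A] {f : MvPolynomial (PairIdx n) K →+* A}
    {i j : Fin (n + 1)} (hij : i ≠ j) (hf : IsUnit (f (T K n (min i j) (max i j)))) :
    IsUnit (f (skewT K n i j)) := by
  rcases hij.lt_or_gt with h | h
  · rw [min_eq_left (Fin.le_def.mp h.le), max_eq_right (Fin.le_def.mp h.le)] at hf
    rwa [skewT_of_lt h]
  · rw [min_eq_right (Fin.le_def.mp h.le), max_eq_left (Fin.le_def.mp h.le)] at hf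
    rwa [(isAlternatingFamily_skewT K n).eq_neg_swap, map_neg, IsUnit.neg_iff, skewT_of_lt h]

theorem isUnit_algebraMap_T_s2 {a b : ℕ} (hab : a < b) (hb : b ≤ n) :
    IsUnit (algebraMap (MvPolynomial (PairIdx n) K) (Laurent K n) (T K n a b)) := by
  rw [T, dif_pos ⟨hab, hb⟩]
  exact IsLocalization.map_units (Laurent K n)
    (⟨X ⟨(a, b), hab, hb⟩, Submonoid.subset_closure ⟨_, rfl⟩⟩ : varMonoid K n)

end Polynomial

theorem stmt2_general (K : Type*) [Field K] (n : ℕ) {A : Type*} [CommRing A]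
    (f : MvPolynomial (PairIdx n) K →+* A)
    (i₀ j₀ : ℕ) (hi₀ : i₀ ≤ n) (hj₀ : j₀ ≤ n) (hne : i₀ ≠ j₀)
    (hf : IsUnit (f (T K n (min i₀ j₀) (max i₀ j₀))))
    (I : Ideal A)
    (hI : I = Ideal.span {x : A | ∃ a b c d : ℕ,
        a < b ∧ b < c ∧ c < d ∧ d ≤ n ∧
        i₀ ∈ ({a, b, c, d} : Finset ℕ) ∧ j₀ ∈ ({a, b, c, d} : Finset ℕ) ∧
        x = f (q K n a b c d)})
    (a b c d : ℕ) (hab : a < b) (hbc : b < c) (hcd : c < d) (hd : d ≤ n) :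
    f (q K n a b c d) ∈ I := by
  lift i₀ to Fin (n + 1) using Nat.lt_succ_of_le hi₀
  lift j₀ to Fin (n + 1) using Nat.lt_succ_of_le hj₀
  have sorted_mem (x : Fin 4 → Fin (n + 1)) (hx : StrictMono x) (hs : {i₀, j₀} ⊆ Set.range x) :
      pluckerRel (skewT K n) x ∈ I.comap f := by
    have entry_mem (r : Fin 4) :
        (x r : ℕ) ∈ ({(x 0 : ℕ), (x 1 : ℕ), (x 2 : ℕ), (x 3 : ℕ)} : Finset ℕ) := by
      fin_cases r <;> simp
    obtain ⟨⟨r, rfl⟩, ⟨s, rfl⟩⟩ := Set.pair_subset_iff.mp hs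
    rw [Ideal.mem_comap, pluckerRel_skewT hx, hI]
    exact Ideal.subset_span ⟨x 0, x 1, x 2, x 3, hx (by decide), hx (by decide), hx (by decide),
      (x 3).is_le, entry_mem r, entry_mem s, rfl⟩
  have mem (k l : Fin (n + 1)) : pluckerRel (skewT K n) ![i₀, j₀, k, l] ∈ I.comap f :=
    pluckerRel_mem_of_strictMono (isAlternatingFamily_skewT K n) sorted_mem _
      (Set.pair_subset ⟨0, rfl⟩ ⟨1, rfl⟩)
  let x : Fin 4 → Fin (n + 1) :=
    ![⟨a, by omega⟩, ⟨b, by omega⟩, ⟨c, by omega⟩, ⟨d, by omega⟩]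
  have hx : StrictMono x := by simp [x, hab, hbc, hcd]
  have sq_mul_mem : f (skewT K n i₀ j₀) ^ 2 * f (q K n a b c d) ∈ I := by
    have := sq_mul_pluckerRel_mem mem x
    rwa [pluckerRel_skewT hx, Ideal.mem_comap, map_mul, map_pow] at this
  have hu : IsUnit (f (skewT K n i₀ j₀)) := isUnit_map_skewT (Fin.val_ne_iff.mp hne) hf
  exact (I.unit_mul_mem_iff_mem (hu.pow 2)).mp sq_mul_mem

/-- Let `I ⊆ L` be the ideal generated by the images of the Plücker relations
`q({i₀,j₀,k,l})` (the Plücker relation of the elements of the 4-element set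
`{i₀,j₀,k,l}` sorted increasingly, i.e. `q(a,b,c,d)` where `a < b < c < d` and
`{a,b,c,d} = {i₀,j₀,k,l}`) for all `k, l ∈ {0,…,n}` with `i₀,j₀,k,l` pairwise
distinct. Then for all pairwise distinct `i,j,k,l ∈ {0,…,n}` the image of the
Plücker relation `q({i,j,k,l})` lies in `I`. -/
theorem stmt2 (K : Type*) [Field K] (n : ℕ) (hn : 4 ≤ n)
    (i₀ j₀ : ℕ) (hi₀ : i₀ ≤ n) (hj₀ : j₀ ≤ n) (hne : i₀ ≠ j₀)
    (I : Ideal (Laurent K n))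
    (hI : I = Ideal.span {x : Laurent K n | ∃ a b c d : ℕ,
        a < b ∧ b < c ∧ c < d ∧ d ≤ n ∧
        i₀ ∈ ({a, b, c, d} : Finset ℕ) ∧ j₀ ∈ ({a, b, c, d} : Finset ℕ) ∧
        x = algebraMap (MvPolynomial (PairIdx n) K) (Laurent K n) (q K n a b c d)}) :
    ∀ i j k l : ℕ, i ≤ n → j ≤ n → k ≤ n → l ≤ n →
      i ≠ j → i ≠ k → i ≠ l → j ≠ k → j ≠ l → k ≠ l →
      ∀ a b c d : ℕ, a < b → b < c → c < d →
        ({a, b, c, d} : Finset ℕ) = {i, j, k, l} →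
        algebraMap (MvPolynomial (PairIdx n) K) (Laurent K n) (q K n a b c d) ∈ I := by
  intro i j k l hi hj hk hl _ _ _ _ _ _ a b c d hab hbc hcd hset
  have hd : d ∈ ({i, j, k, l} : Finset ℕ) := by simp [← hset]
  simp only [Finset.mem_insert, Finset.mem_singleton] at hd
  exact stmt2_general K n _ i₀ j₀ hi₀ hj₀ hne
    (isUnit_algebraMap_T_s2 (by omega) (by omega)) I hI a b c d hab hbc hcd (by omega)
end
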